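/- Let A be an IFA over a finite alphabet Σ with n states. Then there exists a weighted automaton A' over the two-element field ZMod 2 with at most n states such that for every word w ∈ Σ*: L_{A'}(w) = 1 in ZMod 2 if and only if L_A(w) = 1 in ℚ; i.e., the mod-2 multiplicity automaton A' accepts exactly the language L(A). -/

import Mathlib

open Matrix

/-- An `F`-weighted automaton over the alphabet `A`: a finite state set `Q`,
transition matrices `M a`, an initial row vector `init`, and a final column vector `fin`. -/
structure WAut (A : Type*) (F : Type*) [Semiring F] where
  Q : Type
  [fintypeQ : Fintype Q]
  [decEqQ : DecidableEq Q]
  M : A → Matrix Q Q F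
  init : Q → F
  fin : Q → F

attribute [instance] WAut.fintypeQ WAut.decEqQ

/-- The value `L_W(w) = α · M(w) · η` of the weighted automaton `W` on the word `w`. -/
def WAut.val {A F : Type*} [Semiring F] (W : WAut A F) (w : List A) : F :=
  W.init ⬝ᵥ ((w.map W.M).prod *ᵥ W.fin)

/-- The number of states of a weighted automaton. -/
def WAut.card {A F : Type*} [Semiring F] (W : WAut A F) : ℕ := Fintype.card W.Q

/-- An image-binary finite automaton (IFA): a `ℚ`-weighted automaton whose value on every
word is `0` or `1`. -/
def WAut.IsIFA {A : Type*} (W : WAut A ℚ) : Prop :=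
  ∀ w : List A, W.val w = 0 ∨ W.val w = 1

/-!
The Hankel matrix of the function computed by an automaton with `n` states factors through `n`
coordinates, so its minors of size greater than `n` vanish. When its entries lie in a subring `R`,
the minors still vanish after applying a ring homomorphism from `R` to a field, because
determinants commute with ring homomorphisms. Hence the rows of the reduced Hankel matrix span a
space of dimension at most `n`. This space is stable under left quotients by letters, which in a
basis of it become the transition matrices of an automaton over the field.
-/

section Minors

variable {m n : Type*}

theorem det_mul_eq_zero_of_card_lt {R : Type*} [CommRing R] [Fintype m] [DecidableEq m]
    [Fintype n] (P : Matrix m n R) (Q : Matrix n m R) (h : Fintype.card n < Fintype.card m) :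
    (P * Q).det = 0 := by
  let k := Fintype.card m - Fintype.card n
  have hk : 0 < k := Nat.sub_pos_of_lt h
  have e : m ≃ n ⊕ Fin k := Fintype.equivOfCardEq (by simp [k]; lia)
  let P' : Matrix m m R := (fromCols P 0).submatrix id e
  let Q' : Matrix m m R := (fromRows Q 0).submatrix e id
  have hPQ : P * Q = P' * Q' := by
    rw [submatrix_mul_equiv, fromCols_mul_fromRows, Matrix.zero_mul, add_zero, submatrix_id_id]
  have hQ' : Q'.det = 0 :=
    det_eq_zero_of_row_eq_zero (e.symm (Sum.inr ⟨0, hk⟩)) fun j => by simp [Q']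
  rw [hPQ, det_mul, hQ', mul_zero]

variable {F : Type*} [Field F] {M : Matrix m n F}

theorem exists_det_submatrix_ne_zero_of_linearIndependent_row [Fintype m] [DecidableEq m]
    (hM : LinearIndependent F M.row) : ∃ c : m → n, (M.submatrix id c).det ≠ 0 := by
  have hspan : Submodule.span F (Set.range M.col) = ⊤ :=
    span_flip_eq_top_iff_linearIndependent.mpr hM
  obtain ⟨κ, c, -, hc, hli⟩ := exists_linearIndependent' F M.col
  let e : m ≃ κ := (Pi.basisFun F m).indexEquiv (.mk hli (hc.trans hspan).ge)
  have hcols : LinearIndependent F (M.submatrix id (c ∘ e)).col := hli.comp e e.injective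
  exact ⟨c ∘ e, ((isUnit_iff_isUnit_det _).mp
    (linearIndependent_cols_iff_isUnit.mp hcols)).ne_zero⟩

theorem rank_span_range_row_le_of_det_submatrix_eq_zero {k : ℕ}
    (h : ∀ (r : Fin (k + 1) → m) (c : Fin (k + 1) → n), (M.submatrix r c).det = 0) :
    Module.rank F (Submodule.span F (Set.range M.row)) ≤ k := by
  obtain ⟨b, hb, hspan, hli⟩ := exists_linearIndependent F (Set.range M.row)
  choose r hr using fun x : b => hb x.2
  have hrow : LinearIndependent F (M.row ∘ r) := (funext hr : M.row ∘ r = (↑)) ▸ hli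
  rw [← hspan, rank_span_set hli]
  refine Cardinal.card_le_of fun t => ?_
  by_contra! ht
  obtain ⟨e⟩ : Nonempty (Fin (k + 1) ↪ t) :=
    Function.Embedding.nonempty_of_card_le (by simpa using ht)
  have hminor : LinearIndependent F (M.submatrix (fun i => r (e i)) id).row :=
    hrow.comp (fun i => (e i : b)) (Subtype.val_injective.comp e.injective)
  obtain ⟨c, hc⟩ := exists_det_submatrix_ne_zero_of_linearIndependent_row hminor
  exact hc (h _ c)

end Minors

/-- The Hankel matrix of a function on words, indexed by prefixes and suffixes. Its row at `u` is
the left quotient `v ↦ f (u ++ v)`. -/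
def hankel {A R : Type*} (f : List A → R) : Matrix (List A) (List A) R :=
  of fun u v => f (u ++ v)

/-- The left quotient by the letter `a`, as the linear endomorphism `g ↦ (w ↦ g (a :: w))` of the
space of functions on words. -/
def letterQuotient {A : Type*} (F : Type*) [Semiring F] (a : A) :
    (List A → F) →ₗ[F] (List A → F) :=
  LinearMap.funLeft F F (List.cons a)

/-- The row space of the Hankel matrix, that is, the span of the left quotients of `f`. -/
def hankelSpace {A F : Type*} [Semiring F] (f : List A → F) : Submodule F (List A → F) :=
  Submodule.span F (Set.range (hankel f).row)

section HankelSpace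

variable {A F : Type*} [Semiring F] (f : List A → F)

theorem self_mem_hankelSpace : f ∈ hankelSpace f :=
  Submodule.subset_span ⟨[], rfl⟩

theorem hankelSpace_le_comap_letterQuotient (a : A) :
    hankelSpace f ≤ (hankelSpace f).comap (letterQuotient F a) := by
  refine Submodule.span_le.mpr ?_
  rintro _ ⟨u, rfl⟩
  refine Submodule.subset_span ⟨u ++ [a], ?_⟩
  ext w
  simp [hankel, letterQuotient, LinearMap.funLeft_apply]

end HankelSpace

namespace WAut

variable {A F : Type*}

/-- The matrix whose row at `u` is the state vector `α · M(u)` reached after reading `u`. -/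
def forward [Semiring F] (W : WAut A F) : Matrix (List A) W.Q F :=
  of fun u => W.init ᵥ* (u.map W.M).prod

/-- The matrix whose column at `v` is the vector `M(v) · η` of values of `v` from each state. -/
def backward [Semiring F] (W : WAut A F) : Matrix W.Q (List A) F :=
  of fun q v => ((v.map W.M).prod *ᵥ W.fin) q

theorem hankel_val [Semiring F] (W : WAut A F) : hankel W.val = W.forward * W.backward := by
  ext u v
  change W.val (u ++ v) = (W.init ᵥ* (u.map W.M).prod) ⬝ᵥ ((v.map W.M).prod *ᵥ W.fin)
  rw [val, List.map_append, List.prod_append, ← mulVec_mulVec, dotProduct_mulVec]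

theorem det_submatrix_hankel_val_eq_zero [CommRing F] (W : WAut A F) {κ : Type*} [Fintype κ]
    [DecidableEq κ] (r c : κ → List A) (h : W.card < Fintype.card κ) :
    ((hankel W.val).submatrix r c).det = 0 := by
  rw [hankel_val, submatrix_mul _ _ r id c Function.bijective_id]
  exact det_mul_eq_zero_of_card_lt _ _ h

section Realization

variable [CommSemiring F] {κ : Type} [Fintype κ] [DecidableEq κ] {U : Submodule F (List A → F)}
  (b : Module.Basis κ F U) (hU : ∀ a, U ≤ U.comap (letterQuotient F a))

/-- The automaton with states a basis of a space `U` of functions on words that is stable under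
left quotients by letters, started at `f ∈ U`. State vectors are coordinate vectors of elements of
`U`; since they are rows, the transition matrices are transposed. -/
noncomputable def ofBasis (f : U) : WAut A F where
  Q := κ
  M a := (LinearMap.toMatrix b b ((letterQuotient F a).restrict (hU a)))ᵀ
  init := b.repr f
  fin i := (b i : List A → F) []

theorem val_ofBasis (f : U) (w : List A) : (ofBasis b hU f).val w = (f : List A → F) w := by
  induction w generalizing f with
  | nil =>
    have hf := congrArg (fun g : U => (g : List A → F) []) (b.sum_repr f)
    simp only [Submodule.coe_sum, Submodule.coe_smul, Finset.sum_apply, Pi.smul_apply,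
      smul_eq_mul] at hf
    rw [val, List.map_nil, List.prod_nil, one_mulVec]
    exact hf
  | cons a w ih =>
    let g : U := (letterQuotient F a).restrict (hU a) f
    have hstep : (ofBasis b hU f).init ᵥ* (ofBasis b hU f).M a = (ofBasis b hU g).init :=
      (vecMul_transpose _ _).trans (LinearMap.toMatrix_mulVec_repr b b _ f)
    calc (ofBasis b hU f).val (a :: w)
        = ((ofBasis b hU f).init ᵥ* (ofBasis b hU f).M a) ⬝ᵥ
            ((w.map (ofBasis b hU f).M).prod *ᵥ (ofBasis b hU f).fin) := by
          rw [val, List.map_cons, List.prod_cons, ← mulVec_mulVec, dotProduct_mulVec]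
      _ = (ofBasis b hU g).val w := by rw [hstep]; rfl
      _ = (f : List A → F) (a :: w) := ih g

end Realization

theorem exists_card_eq_finrank_hankelSpace [Field F] (f : List A → F)
    [FiniteDimensional F (hankelSpace f)] :
    ∃ B : WAut A F, B.card = Module.finrank F (hankelSpace f) ∧ ∀ w, B.val w = f w :=
  ⟨ofBasis (Module.finBasis F (hankelSpace f)) (hankelSpace_le_comap_letterQuotient f)
      ⟨f, self_mem_hankelSpace f⟩,
    Fintype.card_fin _, val_ofBasis _ _ _⟩

theorem exists_val_eq_map {R K : Type*} [CommRing R] [CommRing K] [Field F] (ι : R →+* K)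
    (φ : R →+* F) (hker : RingHom.ker ι ≤ RingHom.ker φ) (W : WAut A K) (f : List A → R)
    (hf : ∀ w, W.val w = ι (f w)) :
    ∃ B : WAut A F, B.card ≤ W.card ∧ ∀ w, B.val w = φ (f w) := by
  have hminor (r c : Fin (W.card + 1) → List A) : ((hankel (φ ∘ f)).submatrix r c).det = 0 := by
    have hι : ι ((hankel f).submatrix r c).det = 0 := by
      rw [RingHom.map_det, ← W.det_submatrix_hankel_val_eq_zero r c (by simp), funext hf]
      rfl
    exact (RingHom.map_det φ _).symm.trans (hker hι)
  have hrank : Module.rank F (hankelSpace (φ ∘ f)) ≤ W.card :=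
    rank_span_range_row_le_of_det_submatrix_eq_zero hminor
  have : FiniteDimensional F (hankelSpace (φ ∘ f)) :=
    Module.rank_lt_aleph0_iff.mp (hrank.trans_lt Cardinal.natCast_lt_aleph0)
  obtain ⟨B, hcard, hval⟩ := exists_card_eq_finrank_hankelSpace (φ ∘ f)
  exact ⟨B, hcard.trans_le (Module.finrank_le_of_rank_le hrank), hval⟩

end WAut

theorem ifa_to_mod2MA_general {A K F : Type*} [CommRing K] [Field F]
    (hchar : ringChar F ∣ ringChar K) (W : WAut A K) (hW : ∀ w, W.val w = 0 ∨ W.val w = 1) :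
    ∃ B : WAut A F, B.card ≤ W.card ∧ ∀ w, B.val w = 1 ↔ W.val w = 1 := by
  classical
  let f (w : List A) : ℤ := if W.val w = 1 then 1 else 0
  have hf (w : List A) : W.val w = Int.castRingHom K (f w) := by
    by_cases h : W.val w = 1
    · simp [f, h]
    · simpa [f, h] using (hW w).resolve_right h
  have hker : RingHom.ker (Int.castRingHom K) ≤ RingHom.ker (Int.castRingHom F) := fun n hn =>
    (CharP.intCast_eq_zero_iff F (ringChar F) n).mpr
      ((Int.natCast_dvd_natCast.mpr hchar).trans
        ((CharP.intCast_eq_zero_iff K (ringChar K) n).mp hn))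
  obtain ⟨B, hcard, hval⟩ := W.exists_val_eq_map _ _ hker f hf
  exact ⟨B, hcard, fun w => by simp [hval, f]⟩

/-- **IFAs to mod-2 multiplicity automata without blowup.** For every IFA `W` with `n`
states there is a weighted automaton `B` over `ZMod 2` with at most `n` states accepting
exactly `L(W)`: for all words `w`, `L_B(w) = 1` in `ZMod 2` iff `L_W(w) = 1` in `ℚ`. -/
theorem ifa_to_mod2MA {A : Type*} (W : WAut A ℚ) (hW : W.IsIFA) :
    ∃ B : WAut A (ZMod 2), B.card ≤ W.card ∧
      ∀ w : List A, B.val w = 1 ↔ W.val w = 1 := by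
  exact ifa_to_mod2MA_general (ringChar.eq_zero (R := ℚ) ▸ dvd_zero _) W hW
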